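/- arXiv:2010.09785 — 13 statements merged into one kernel-verified Lean document; each statement's English description precedes it below -/
import Mathlib

section
/- Let P and L be skew-symmetric 3×3 real matrices. Then P·L·P = (1/2)·tr(L·P)·P. -/
open Matrix

theorem skew_entry (P : Matrix (Fin 3) (Fin 3) ℝ) (hP : Pᵀ = -P) (i j : Fin 3) :
    P j i = - P i j := by
  have h := congrFun (congrFun hP i) j
  simpa using h

theorem stmt_0 (P L : Matrix (Fin 3) (Fin 3) ℝ)
    (hP : Pᵀ = -P) (hL : Lᵀ = -L) :
    P * L * P = ((1 / 2) * (L * P).trace) • P := by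
  have p := skew_entry P hP
  have l := skew_entry L hL
  have p0 : P 0 0 = 0 := by linarith [p 0 0]
  have p1 : P 1 1 = 0 := by linarith [p 1 1]
  have p2 : P 2 2 = 0 := by linarith [p 2 2]
  have l0 : L 0 0 = 0 := by linarith [l 0 0]
  have l1 : L 1 1 = 0 := by linarith [l 1 1]
  have l2 : L 2 2 = 0 := by linarith [l 2 2]
  have p01 := p 0 1
  have p02 := p 0 2
  have p12 := p 1 2
  have l01 := l 0 1
  have l02 := l 0 2
  have l12 := l 1 2
  clear p l
  ext i j
  fin_cases i <;> fin_cases j <;>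
    simp [Matrix.mul_apply, Fin.sum_univ_three, Matrix.trace, p0, p1, p2, l0, l1, l2,
      p01, p02, p12, l01, l02, l12] <;> ring
end

section
/- Let P and L be skew-symmetric 3×3 real matrices and set F := 1 − (1/2)·tr(L·P). Then det(I − L·P) = F², where I is the 3×3 identity matrix. -/
open Matrix

theorem stmt_1 (P L : Matrix (Fin 3) (Fin 3) ℝ)
    (hP : Pᵀ = -P) (hL : Lᵀ = -L)
    (F : ℝ) (hF : F = 1 - (1 / 2) * (L * P).trace) :
    (1 - L * P).det = F ^ 2 := by
  have p : ∀ i j, P j i = -P i j := fun i j => congrFun (congrFun hP i) j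
  have l : ∀ i j, L j i = -L i j := fun i j => congrFun (congrFun hL i) j
  have p0 : P 0 0 = 0 := by linarith [p 0 0]
  have p1 : P 1 1 = 0 := by linarith [p 1 1]
  have p2 : P 2 2 = 0 := by linarith [p 2 2]
  have l0 : L 0 0 = 0 := by linarith [l 0 0]
  have l1 : L 1 1 = 0 := by linarith [l 1 1]
  have l2 : L 2 2 = 0 := by linarith [l 2 2]
  have o01 : (1 : Matrix (Fin 3) (Fin 3) ℝ) 0 1 = 0 := by simp
  subst hF
  simp only [Matrix.det_fin_three, Matrix.trace_fin_three, Matrix.sub_apply, Matrix.mul_apply,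
    Fin.sum_univ_three, Matrix.one_apply, p0, p1, p2, l0, l1, l2, p 0 1, p 0 2, p 1 2,
    l 0 1, l 0 2, l 1 2]
  simp
  ring
end

section
/- Let P and L be skew-symmetric 3×3 real matrices and set F := 1 − (1/2)·tr(L·P). Then the matrix I − L·P is invertible if and only if F ≠ 0. -/
open Matrix

theorem stmt_2 (P L : Matrix (Fin 3) (Fin 3) ℝ)
    (hP : Pᵀ = -P) (hL : Lᵀ = -L)
    (F : ℝ) (hF : F = 1 - (1 / 2) * (L * P).trace) :
    IsUnit (1 - L * P) ↔ F ≠ 0 := by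
  have p : ∀ i j, P j i = -P i j := fun i j => congrFun (congrFun hP i) j
  have l : ∀ i j, L j i = -L i j := fun i j => congrFun (congrFun hL i) j
  have p0 : ∀ i, P i i = 0 := fun i => by linarith [p i i]
  have l0 : ∀ i, L i i = 0 := fun i => by linarith [l i i]
  have key : (1 - L * P).det = F ^ 2 := by
    rw [hF, Matrix.det_fin_three]
    simp only [Matrix.trace, Matrix.diag, Matrix.sub_apply, Matrix.mul_apply, Fin.sum_univ_three,
      Matrix.one_apply, p0, l0, p 0 1, p 0 2, p 1 2, l 0 1, l 0 2, l 1 2]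
    simp
    ring
  rw [Matrix.isUnit_iff_isUnit_det, key, isUnit_iff_ne_zero]
  exact pow_ne_zero_iff two_ne_zero
end

section
/- Let P and L be skew-symmetric 3×3 real matrices and set F := 1 − (1/2)·tr(L·P). If F ≠ 0, then P·(I − L·P)⁻¹ = F⁻¹·P. (This is the coordinate form of the statement that on a 3-dimensional manifold the λ-gauge transformation of a bivector field Π is well defined on the set {F = 1 + ⟨λ,Π⟩ ≠ 0} and there equals (1/F)·Π.) -/
open Matrix

theorem stmt_3 (P L : Matrix (Fin 3) (Fin 3) ℝ)
    (hP : Pᵀ = -P) (hL : Lᵀ = -L)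
    (F : ℝ) (hF : F = 1 - (1 / 2) * (L * P).trace) (hF0 : F ≠ 0) :
    P * (1 - L * P)⁻¹ = F⁻¹ • P := by
  have form : ∀ A : Matrix (Fin 3) (Fin 3) ℝ, Aᵀ = -A →
      ∃ a b c : ℝ, A = !![0, a, b; -a, 0, c; -b, -c, 0] := by
    intro A hA
    have h : ∀ i j, A j i = - A i j := fun i j => by
      simpa using congrFun (congrFun hA i) j
    refine ⟨A 0 1, A 0 2, A 1 2, ?_⟩
    have h0 := h 0 0
    have h1 := h 1 1
    have h2 := h 2 2
    ext i j
    fin_cases i <;> fin_cases j <;> simp <;> first | linarith | exact h _ _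
  obtain ⟨a, b, c, rfl⟩ := form P hP
  obtain ⟨x, y, z, rfl⟩ := form L hL
  have hF' : F = 1 + (a * x + b * y + c * z) := by
    rw [hF]
    simp [Matrix.trace, Fin.sum_univ_three, Matrix.mul_apply]
    ring
  clear hF
  have hdet : (1 - !![0, x, y; -x, 0, z; -y, -z, 0] *
      !![0, a, b; -a, 0, c; -b, -c, 0] : Matrix (Fin 3) (Fin 3) ℝ).det = F ^ 2 := by
    rw [hF', Matrix.det_fin_three]
    simp [Fin.sum_univ_three, Matrix.mul_apply, Matrix.one_apply]
    ring
  have hmul : !![0, a, b; -a, 0, c; -b, -c, 0] * (1 - !![0, x, y; -x, 0, z; -y, -z, 0] *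
      !![0, a, b; -a, 0, c; -b, -c, 0] : Matrix (Fin 3) (Fin 3) ℝ)
      = F • !![0, a, b; -a, 0, c; -b, -c, 0] := by
    rw [hF']
    ext i j
    fin_cases i <;> fin_cases j <;>
      simp [Fin.sum_univ_three, Matrix.mul_apply, Matrix.one_apply] <;> ring
  generalize (!![0, a, b; -a, 0, c; -b, -c, 0] : Matrix (Fin 3) (Fin 3) ℝ) = P at *
  generalize (1 - !![0, x, y; -x, 0, z; -y, -z, 0] * P : Matrix (Fin 3) (Fin 3) ℝ) = M at *
  have hu : IsUnit M.det := by
    rw [hdet]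
    exact (pow_ne_zero 2 hF0).isUnit
  have key : P = F⁻¹ • (P * M) := by
    rw [hmul, smul_smul, inv_mul_cancel₀ hF0, one_smul]
  calc P * M⁻¹ = (F⁻¹ • (P * M)) * M⁻¹ := by rw [← key]
    _ = F⁻¹ • P := by rw [Matrix.smul_mul, Matrix.mul_nonsing_inv_cancel_right _ _ hu]
end

section
/- Let U ⊆ ℝ³ be open and let P be a smooth map from U to skew-symmetric 3×3 real matrices whose induced Poisson-type bracket satisfies the Jacobi identity on U. Then for every smooth function h : U → ℝ, the induced Poisson-type bracket of the rescaled matrix field x ↦ h(x)·P(x) also satisfies the Jacobi identity on U. (In particular, on a 3-dimensional space, the gauge transformation (1/F)·Π of a Poisson bivector field Π is again Poisson on the set where F ≠ 0.) -/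
open Matrix

/-- The Poisson-type bracket induced by a matrix field `P` on `ℝ^m`:
`{f,g}(x) = ∑ i j, P(x)_{ij} ∂f/∂xᵢ(x) ∂g/∂xⱼ(x)`. -/
noncomputable def pbracket {m : ℕ} (P : (Fin m → ℝ) → Matrix (Fin m) (Fin m) ℝ)
    (f g : (Fin m → ℝ) → ℝ) (x : Fin m → ℝ) : ℝ :=
  ∑ i, ∑ j, P x i j * fderiv ℝ f x (Pi.single i 1) * fderiv ℝ g x (Pi.single j 1)

/-- The bracket induced by `P` satisfies the Jacobi identity on `U`. -/
def JacobiOn {m : ℕ} (P : (Fin m → ℝ) → Matrix (Fin m) (Fin m) ℝ)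
    (U : Set (Fin m → ℝ)) : Prop :=
  ∀ f g h : (Fin m → ℝ) → ℝ,
    ContDiffOn ℝ (⊤ : ℕ∞) f U → ContDiffOn ℝ (⊤ : ℕ∞) g U → ContDiffOn ℝ (⊤ : ℕ∞) h U →
    ∀ x ∈ U,
      pbracket P f (pbracket P g h) x + pbracket P g (pbracket P h f) x +
        pbracket P h (pbracket P f g) x = 0

theorem pbracket_smul_aux {m : ℕ} (P : (Fin m → ℝ) → Matrix (Fin m) (Fin m) ℝ)
    (h f g : (Fin m → ℝ) → ℝ) :
    pbracket (fun x => h x • P x) f g = fun x => h x * pbracket P f g x := by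
  funext x
  simp only [pbracket, Finset.mul_sum, Matrix.smul_apply, smul_eq_mul, mul_assoc]

theorem pbracket_diff_aux {m : ℕ} {U : Set (Fin m → ℝ)} (hU : IsOpen U)
    {P : (Fin m → ℝ) → Matrix (Fin m) (Fin m) ℝ}
    (hP : ∀ i j, ContDiffOn ℝ (⊤ : ℕ∞) (fun x => P x i j) U)
    {f g : (Fin m → ℝ) → ℝ}
    (hf : ContDiffOn ℝ (⊤ : ℕ∞) f U) (hg : ContDiffOn ℝ (⊤ : ℕ∞) g U)
    {x : Fin m → ℝ} (hx : x ∈ U) : DifferentiableAt ℝ (pbracket P f g) x := by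
  have hn : U ∈ nhds x := hU.mem_nhds hx
  have key : ∀ f : (Fin m → ℝ) → ℝ, ContDiffOn ℝ (⊤ : ℕ∞) f U → ∀ v,
      DifferentiableAt ℝ (fun y => fderiv ℝ f y v) x := by
    intro f hf v
    have h1 : ContDiffAt ℝ 1 (fderiv ℝ f) x :=
      (hf.contDiffAt hn).fderiv_right (WithTop.coe_le_coe.2 (le_top : (1 + 1 : ℕ∞) ≤ ⊤))
    exact (h1.differentiableAt (by simp)).clm_apply (differentiableAt_const v)
  unfold pbracket
  refine DifferentiableAt.fun_sum fun i _ => DifferentiableAt.fun_sum fun j _ => ?_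
  exact ((((hP i j).contDiffAt hn).differentiableAt (by simp)).mul (key f hf _)).mul (key g hg _)

theorem pbracket_mul_aux {m : ℕ} (P : (Fin m → ℝ) → Matrix (Fin m) (Fin m) ℝ)
    {f h k : (Fin m → ℝ) → ℝ} {x : Fin m → ℝ}
    (hh : DifferentiableAt ℝ h x) (hk : DifferentiableAt ℝ k x) :
    pbracket P f (fun y => h y * k y) x =
      h x * pbracket P f k x + k x * pbracket P f h x := by
  simp only [pbracket, fderiv_fun_mul hh hk, Finset.mul_sum, ← Finset.sum_add_distrib]
  refine Finset.sum_congr rfl fun i _ => Finset.sum_congr rfl fun j _ => ?_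
  simp
  ring

/-- In dimension three a bivector is decomposable, so this cyclic sum vanishes. -/
theorem pbracket_plucker_aux (P : (Fin 3 → ℝ) → Matrix (Fin 3) (Fin 3) ℝ)
    {x : Fin 3 → ℝ} (hs : (P x)ᵀ = -P x) (f g k h : (Fin 3 → ℝ) → ℝ) :
    pbracket P g k x * pbracket P f h x + pbracket P k f x * pbracket P g h x +
      pbracket P f g x * pbracket P k h x = 0 := by
  have e : ∀ i j, P x j i = -P x i j := fun i j => by
    simpa using congrFun (congrFun hs i) j
  have d : ∀ i, P x i i = 0 := fun i => by linarith [e i i]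
  simp only [pbracket, Fin.sum_univ_three, d, e 0 1, e 0 2, e 1 2]
  ring

theorem stmt_4 (U : Set (Fin 3 → ℝ)) (hU : IsOpen U)
    (P : (Fin 3 → ℝ) → Matrix (Fin 3) (Fin 3) ℝ)
    (hPsmooth : ∀ i j, ContDiffOn ℝ (⊤ : ℕ∞) (fun x => P x i j) U)
    (hPskew : ∀ x ∈ U, (P x)ᵀ = -P x)
    (hPJacobi : JacobiOn P U)
    (h : (Fin 3 → ℝ) → ℝ) (hh : ContDiffOn ℝ (⊤ : ℕ∞) h U) :
    JacobiOn (fun x => h x • P x) U := by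
  intro f g k hf hg hk x hx
  have hd : DifferentiableAt ℝ h x := (hh.contDiffAt (hU.mem_nhds hx)).differentiableAt (by simp)
  have J := hPJacobi f g k hf hg hk x hx
  have Q := pbracket_plucker_aux P (hPskew x hx) f g k h
  simp only [pbracket_smul_aux]
  rw [pbracket_mul_aux P hd (pbracket_diff_aux hU hPsmooth hg hk hx),
    pbracket_mul_aux P hd (pbracket_diff_aux hU hPsmooth hk hf hx),
    pbracket_mul_aux P hd (pbracket_diff_aux hU hPsmooth hf hg hx)]
  linear_combination (h x) ^ 2 * J + h x * Q
end

section
/- The bivector field on ℝ⁶ given by the skew-symmetric matrix field P(x) with nonzero upper-triangular entries P(x)_{14} = 1, P(x)_{25} = 1, P(x)_{36} = 1, P(x)_{56} = x₂² (and P(x)_{ji} = −P(x)_{ij}, all other entries zero) induces a Poisson-type bracket that satisfies the Jacobi identity on ℝ⁶. -/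
open Matrix

/-- The coefficient matrix of the bivector field
`Π = ∂₁∧∂₄ + ∂₂∧∂₅ + ∂₃∧∂₆ + x₂² ∂₅∧∂₆` on `ℝ⁶`. -/
def Pplasma (x : Fin 6 → ℝ) : Matrix (Fin 6) (Fin 6) ℝ :=
  !![0, 0, 0, 1, 0, 0;
     0, 0, 0, 0, 1, 0;
     0, 0, 0, 0, 0, 1;
     -1, 0, 0, 0, 0, 0;
     0, -1, 0, 0, 0, (x 1) ^ 2;
     0, 0, -1, 0, -(x 1) ^ 2, 0]


/-- Partial derivative. -/
noncomputable def pd (i : Fin 6) (f : (Fin 6 → ℝ) → ℝ) (x : Fin 6 → ℝ) : ℝ :=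
  fderiv ℝ f x (Pi.single i 1)

lemma pbracket_eq (f g : (Fin 6 → ℝ) → ℝ) (x : Fin 6 → ℝ) :
    pbracket Pplasma f g x =
      pd 0 f x * pd 3 g x - pd 3 f x * pd 0 g x + (pd 1 f x * pd 4 g x - pd 4 f x * pd 1 g x)
      + (pd 2 f x * pd 5 g x - pd 5 f x * pd 2 g x)
      + x 1 ^ 2 * (pd 4 f x * pd 5 g x - pd 5 f x * pd 4 g x) := by
  simp [pbracket, Pplasma, Fin.sum_univ_succ, pd]
  simp [Fin.succ, Pi.single]
  ring

lemma pd_diff {f : (Fin 6 → ℝ) → ℝ} (hf : ContDiff ℝ (⊤ : ℕ∞) f) (i : Fin 6) :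
    Differentiable ℝ (pd i f) := by
  have h1 : ContDiff ℝ 1 (fderiv ℝ f) := hf.fderiv_right (by norm_cast)
  exact (h1.clm_apply contDiff_const).differentiable (by norm_num)

lemma pd_comm {f : (Fin 6 → ℝ) → ℝ} (hf : ContDiff ℝ (⊤ : ℕ∞) f) (i j : Fin 6)
    (x : Fin 6 → ℝ) : pd i (pd j f) x = pd j (pd i f) x := by
  have h1 : ContDiff ℝ 1 (fderiv ℝ f) := hf.fderiv_right (by norm_cast)
  have h2 : DifferentiableAt ℝ (fderiv ℝ f) x := h1.differentiable (by norm_num) x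
  have key : ∀ i j : Fin 6, pd i (pd j f) x =
      fderiv ℝ (fderiv ℝ f) x (Pi.single i 1) (Pi.single j 1) := by
    intro i j
    have := (h2.hasFDerivAt.clm_apply (hasFDerivAt_const (Pi.single j (1:ℝ)) x)).fderiv
    unfold pd
    rw [this]
    simp
  rw [key, key]
  have hs : IsSymmSndFDerivAt ℝ f x :=
    hf.contDiffAt.isSymmSndFDerivAt (by simp; norm_cast)
  exact hs _ _

lemma pd_add {u v : (Fin 6 → ℝ) → ℝ} (hu : Differentiable ℝ u) (hv : Differentiable ℝ v)
    (k : Fin 6) (x : Fin 6 → ℝ) : pd k (fun y => u y + v y) x = pd k u x + pd k v x := by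
  unfold pd
  rw [((hu x).hasFDerivAt.fun_add (hv x).hasFDerivAt).fderiv]; rfl

lemma pd_sub {u v : (Fin 6 → ℝ) → ℝ} (hu : Differentiable ℝ u) (hv : Differentiable ℝ v)
    (k : Fin 6) (x : Fin 6 → ℝ) : pd k (fun y => u y - v y) x = pd k u x - pd k v x := by
  unfold pd
  rw [((hu x).hasFDerivAt.fun_sub (hv x).hasFDerivAt).fderiv]; rfl

lemma pd_mul {u v : (Fin 6 → ℝ) → ℝ} (hu : Differentiable ℝ u) (hv : Differentiable ℝ v)
    (k : Fin 6) (x : Fin 6 → ℝ) :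
    pd k (fun y => u y * v y) x = u x * pd k v x + v x * pd k u x := by
  unfold pd
  rw [((hu x).hasFDerivAt.fun_mul (hv x).hasFDerivAt).fderiv]; simp

lemma pd_coord (k : Fin 6) (x : Fin 6 → ℝ) :
    pd k (fun y => y 1 ^ 2) x = if k = 1 then 2 * x 1 else 0 := by
  have h := ((hasFDerivAt_apply (𝕜 := ℝ) (1 : Fin 6) x).pow 2).fderiv
  unfold pd
  rw [h]
  by_cases hk : k = 1
  · subst hk; simp
  · simp [hk, Pi.single_apply, Ne.symm hk]

lemma pd_bracket {f g : (Fin 6 → ℝ) → ℝ} (hf : ContDiff ℝ (⊤ : ℕ∞) f)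
    (hg : ContDiff ℝ (⊤ : ℕ∞) g) (k : Fin 6) (x : Fin 6 → ℝ) :
    pd k (pbracket Pplasma f g) x =
      (pd 0 f x * pd k (pd 3 g) x + pd 3 g x * pd k (pd 0 f) x
        - (pd 3 f x * pd k (pd 0 g) x + pd 0 g x * pd k (pd 3 f) x))
      + (pd 1 f x * pd k (pd 4 g) x + pd 4 g x * pd k (pd 1 f) x
        - (pd 4 f x * pd k (pd 1 g) x + pd 1 g x * pd k (pd 4 f) x))
      + (pd 2 f x * pd k (pd 5 g) x + pd 5 g x * pd k (pd 2 f) x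
        - (pd 5 f x * pd k (pd 2 g) x + pd 2 g x * pd k (pd 5 f) x))
      + (x 1 ^ 2 * (pd 4 f x * pd k (pd 5 g) x + pd 5 g x * pd k (pd 4 f) x
        - (pd 5 f x * pd k (pd 4 g) x + pd 4 g x * pd k (pd 5 f) x))
        + (pd 4 f x * pd 5 g x - pd 5 f x * pd 4 g x) * (if k = 1 then 2 * x 1 else 0)) := by
  have e : pbracket Pplasma f g = _ := funext (pbracket_eq f g)
  have F := pd_diff hf
  have G := pd_diff hg
  have M : ∀ i j, Differentiable ℝ (fun y => pd i f y * pd j g y) :=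
    fun i j => (F i).fun_mul (G j)
  have S : ∀ i j k l, Differentiable ℝ (fun y => pd i f y * pd j g y - pd k f y * pd l g y) :=
    fun i j k l => (M i j).fun_sub (M k l)
  have X : Differentiable ℝ (fun y : Fin 6 → ℝ => y 1 ^ 2) := by fun_prop
  rw [e, pd_add (((S _ _ _ _).fun_add (S _ _ _ _)).fun_add (S _ _ _ _)) (X.fun_mul (S _ _ _ _)),
    pd_add ((S _ _ _ _).fun_add (S _ _ _ _)) (S _ _ _ _), pd_add (S _ _ _ _) (S _ _ _ _),
    pd_mul X (S _ _ _ _), pd_coord]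
  simp only [pd_sub (M _ _) (M _ _), pd_mul (F _) (G _)]

theorem stmt_7 (f g h : (Fin 6 → ℝ) → ℝ)
    (hf : ContDiff ℝ (⊤ : ℕ∞) f) (hg : ContDiff ℝ (⊤ : ℕ∞) g) (hh : ContDiff ℝ (⊤ : ℕ∞) h) :
    ∀ x : Fin 6 → ℝ,
      pbracket Pplasma f (pbracket Pplasma g h) x +
        pbracket Pplasma g (pbracket Pplasma h f) x +
        pbracket Pplasma h (pbracket Pplasma f g) x = 0 := by
  intro x
  rw [pbracket_eq f, pbracket_eq g (pbracket _ _ _), pbracket_eq h (pbracket _ _ _)]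
  simp only [pd_bracket hf hg, pd_bracket hg hh, pd_bracket hh hf]
  have n0 : ¬ ((0 : Fin 6) = 1) := by decide
  have n2 : ¬ ((2 : Fin 6) = 1) := by decide
  have n3 : ¬ ((3 : Fin 6) = 1) := by decide
  have n4 : ¬ ((4 : Fin 6) = 1) := by decide
  have n5 : ¬ ((5 : Fin 6) = 1) := by decide
  simp only [n0, n2, n3, n4, n5, if_true, if_false]
  have c : ∀ {u : (Fin 6 → ℝ) → ℝ}, ContDiff ℝ (⊤ : ℕ∞) u →
      (pd 1 (pd 0 u) x = pd 0 (pd 1 u) x ∧ pd 2 (pd 0 u) x = pd 0 (pd 2 u) x ∧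
      pd 3 (pd 0 u) x = pd 0 (pd 3 u) x ∧ pd 4 (pd 0 u) x = pd 0 (pd 4 u) x ∧
      pd 5 (pd 0 u) x = pd 0 (pd 5 u) x ∧ pd 2 (pd 1 u) x = pd 1 (pd 2 u) x ∧
      pd 3 (pd 1 u) x = pd 1 (pd 3 u) x ∧ pd 4 (pd 1 u) x = pd 1 (pd 4 u) x ∧
      pd 5 (pd 1 u) x = pd 1 (pd 5 u) x ∧ pd 3 (pd 2 u) x = pd 2 (pd 3 u) x ∧
      pd 4 (pd 2 u) x = pd 2 (pd 4 u) x ∧ pd 5 (pd 2 u) x = pd 2 (pd 5 u) x ∧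
      pd 4 (pd 3 u) x = pd 3 (pd 4 u) x ∧ pd 5 (pd 3 u) x = pd 3 (pd 5 u) x ∧
      pd 5 (pd 4 u) x = pd 4 (pd 5 u) x) := fun hu => by
    refine ⟨?_, ?_, ?_, ?_, ?_, ?_, ?_, ?_, ?_, ?_, ?_, ?_, ?_, ?_, ?_⟩ <;>
      exact pd_comm hu _ _ x
  simp only [c hf, c hg, c hh]
  ring
end

section
/- Let U = {x ∈ ℝ³ : x₁² + x₂² ≠ 0 and x₁² + x₂² − x₃² ≠ 0}, and let W be the vector field on U with components W¹(x) = x₁x₃·e(x)/(x₁²+x₂²), W²(x) = x₂x₃·e(x)/(x₁²+x₂²), W³(x) = e(x), where e(x) = exp(−1/(x₁²+x₂²−x₃²)²). Then W is a Poisson vector field (a 1-cocycle) of the 𝔰𝔩(2) Lie–Poisson structure: for all smooth functions f, g : U → ℝ, W({f,g}) = {W(f), g} + {f, W(g)}, where {·,·} is the bracket induced by the skew-symmetric matrix field P(x) with P(x)_{12} = −x₃, P(x)_{13} = −x₂, P(x)_{23} = x₁, and W(f) = Σ_i Wⁱ·∂f/∂x_i denotes the derivative of f along W. -/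
open Matrix

/-- The derivative of a function `f` along a vector field `W` on `ℝ^m`:
`W(f) = ∑ i, Wⁱ ∂f/∂xᵢ`. -/
noncomputable def vfDeriv {m : ℕ} (W : (Fin m → ℝ) → Fin m → ℝ)
    (f : (Fin m → ℝ) → ℝ) (x : Fin m → ℝ) : ℝ :=
  ∑ i, W x i * fderiv ℝ f x (Pi.single i 1)

/-- The coefficient matrix of the `𝔰𝔩(2)` Lie–Poisson bivector field on `ℝ³`. -/
def Psl2 (x : Fin 3 → ℝ) : Matrix (Fin 3) (Fin 3) ℝ :=
  !![0, -(x 2), -(x 1);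
     x 2, 0, x 0;
     x 1, -(x 0), 0]

/-- The factor `e(x) = exp(−1/(x₁²+x₂²−x₃²)²)`. -/
noncomputable def eFac (x : Fin 3 → ℝ) : ℝ :=
  Real.exp (-1 / ((x 0) ^ 2 + (x 1) ^ 2 - (x 2) ^ 2) ^ 2)

/-- The non-Hamiltonian Poisson vector field `W` of `𝔰𝔩(2)`. -/
noncomputable def Wsl2 (x : Fin 3 → ℝ) : Fin 3 → ℝ :=
  ![x 0 * x 2 * eFac x / ((x 0) ^ 2 + (x 1) ^ 2),
    x 1 * x 2 * eFac x / ((x 0) ^ 2 + (x 1) ^ 2),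
    eFac x]


theorem partial_data (f : (Fin 3 → ℝ) → ℝ) (x : Fin 3 → ℝ) (hf : ContDiffAt ℝ 2 f x) :
    ∃ L : Fin 3 → ((Fin 3 → ℝ) →L[ℝ] ℝ),
      (∀ i, HasFDerivAt (fun y => fderiv ℝ f y (Pi.single i 1)) (L i) x) ∧
      ∀ i j, L i (Pi.single j 1) = L j (Pi.single i 1) := by
  have hd : DifferentiableAt ℝ (fderiv ℝ f) x :=
    (hf.fderiv_right (m := 1) (by norm_num)).differentiableAt (by norm_num)
  have hs : IsSymmSndFDerivAt ℝ f x := hf.isSymmSndFDerivAt (by simp)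
  refine ⟨fun i => (fderiv ℝ (fderiv ℝ f) x).flip (Pi.single i 1), fun i => ?_, fun i j => ?_⟩
  · have := hd.hasFDerivAt.clm_apply (hasFDerivAt_const (Pi.single i (1:ℝ) : Fin 3 → ℝ) x)
    simpa using this
  · simpa using hs.eq _ _

theorem W_data (x : Fin 3 → ℝ) (hr : (x 0) ^ 2 + (x 1) ^ 2 ≠ 0)
    (hC : (x 0) ^ 2 + (x 1) ^ 2 - (x 2) ^ 2 ≠ 0) :
    ∃ (k : ℝ) (M : (Fin 3 → ℝ) →L[ℝ] ℝ), HasFDerivAt eFac M x ∧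
      M (Pi.single 0 1) = k * x 0 ∧ M (Pi.single 1 1) = k * x 1 ∧
      M (Pi.single 2 1) = - k * x 2 := by
  have h (i : Fin 3) : HasFDerivAt (fun y : Fin 3 → ℝ => y i)
    (ContinuousLinearMap.proj (R := ℝ) (φ := fun _ : Fin 3 => ℝ) i) x := hasFDerivAt_apply i x
  have hCd := (((h 0).pow 2).add ((h 1).pow 2)).sub ((h 2).pow 2)
  have hφ : HasDerivAt (fun t : ℝ => Real.exp (-1 / t ^ 2)) 
    (Real.exp (-1 / ((x 0) ^ 2 + (x 1) ^ 2 - (x 2) ^ 2) ^ 2) * 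
      (2 / ((x 0) ^ 2 + (x 1) ^ 2 - (x 2) ^ 2) ^ 3)) ((x 0) ^ 2 + (x 1) ^ 2 - (x 2) ^ 2) := by
    have h1 := ((hasDerivAt_const ((x 0) ^ 2 + (x 1) ^ 2 - (x 2) ^ 2) (-1:ℝ)).fun_div
      (hasDerivAt_pow 2 ((x 0) ^ 2 + (x 1) ^ 2 - (x 2) ^ 2)) (pow_ne_zero 2 hC)).exp
    refine h1.congr_deriv ?_
    congr 1
    generalize (x 0) ^ 2 + (x 1) ^ 2 - (x 2) ^ 2 = c at hC
    field_simp
    norm_num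
    ring
  have := hφ.comp_hasFDerivAt x hCd
  refine ⟨2 * (Real.exp (-1 / ((x 0) ^ 2 + (x 1) ^ 2 - (x 2) ^ 2) ^ 2) * 
      (2 / ((x 0) ^ 2 + (x 1) ^ 2 - (x 2) ^ 2) ^ 3)), _, this, ?_, ?_, ?_⟩ <;>
  · simp
    ring

theorem W_f (x : Fin 3 → ℝ) (hr : (x 0) ^ 2 + (x 1) ^ 2 ≠ 0)
    (M : (Fin 3 → ℝ) →L[ℝ] ℝ) (hM : HasFDerivAt eFac M x)
    (f : (Fin 3 → ℝ) → ℝ) (L : Fin 3 → ((Fin 3 → ℝ) →L[ℝ] ℝ))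
    (hL : ∀ i, HasFDerivAt (fun y => fderiv ℝ f y (Pi.single i 1)) (L i) x) (v : Fin 3 → ℝ) :
    fderiv ℝ (vfDeriv Wsl2 f) x v =
      (v 0 * x 2 * eFac x + x 0 * v 2 * eFac x + x 0 * x 2 * M v) / (x 0 ^ 2 + x 1 ^ 2)
          * fderiv ℝ f x (Pi.single 0 1)
      - x 0 * x 2 * eFac x * (2 * x 0 * v 0 + 2 * x 1 * v 1) / (x 0 ^ 2 + x 1 ^ 2) ^ 2
          * fderiv ℝ f x (Pi.single 0 1)
      + x 0 * x 2 * eFac x / (x 0 ^ 2 + x 1 ^ 2) * L 0 v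
      + ((v 1 * x 2 * eFac x + x 1 * v 2 * eFac x + x 1 * x 2 * M v) / (x 0 ^ 2 + x 1 ^ 2)
          * fderiv ℝ f x (Pi.single 1 1)
      - x 1 * x 2 * eFac x * (2 * x 0 * v 0 + 2 * x 1 * v 1) / (x 0 ^ 2 + x 1 ^ 2) ^ 2
          * fderiv ℝ f x (Pi.single 1 1)
      + x 1 * x 2 * eFac x / (x 0 ^ 2 + x 1 ^ 2) * L 1 v)
      + M v * fderiv ℝ f x (Pi.single 2 1) + eFac x * L 2 v := by
  have h (i : Fin 3) : HasFDerivAt (fun y : Fin 3 → ℝ => y i)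
    (ContinuousLinearMap.proj (R := ℝ) (φ := fun _ : Fin 3 => ℝ) i) x := hasFDerivAt_apply i x
  have hrd := ((hasDerivAt_inv hr).comp_hasFDerivAt x (((h 0).pow 2).add ((h 1).pow 2)))
  have h3 := ((((((h 0).mul (h 2)).mul hM).mul hrd).mul (hL 0)).add
    (((((h 1).mul (h 2)).mul hM).mul hrd).mul (hL 1))).add (hM.mul (hL 2))
  have h4 := h3.congr_of_eventuallyEq (f₁ := vfDeriv Wsl2 f) (Filter.Eventually.of_forall fun y => by
    simp [vfDeriv, Fin.sum_univ_three, Wsl2, div_eq_mul_inv])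
  rw [h4.fderiv]
  simp
  field_simp
  ring

theorem P_fg (x : Fin 3 → ℝ) 
    (f : (Fin 3 → ℝ) → ℝ) (L : Fin 3 → ((Fin 3 → ℝ) →L[ℝ] ℝ))
    (hL : ∀ i, HasFDerivAt (fun y => fderiv ℝ f y (Pi.single i 1)) (L i) x) 
    (g : (Fin 3 → ℝ) → ℝ) (K : Fin 3 → ((Fin 3 → ℝ) →L[ℝ] ℝ))
    (hK : ∀ i, HasFDerivAt (fun y => fderiv ℝ g y (Pi.single i 1)) (K i) x) (v : Fin 3 → ℝ) :
    fderiv ℝ (pbracket Psl2 f g) x v =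
      pbracket (fun _ => Psl2 v) f g x 
      + ∑ i, ∑ j, Psl2 x i j * (L i v * fderiv ℝ g x (Pi.single j 1) 
        + fderiv ℝ f x (Pi.single i 1) * K j v) := by
  have h (i : Fin 3) : HasFDerivAt (fun y : Fin 3 → ℝ => y i)
    (ContinuousLinearMap.proj (R := ℝ) (φ := fun _ : Fin 3 => ℝ) i) x := hasFDerivAt_apply i x
  have t (i j : Fin 3) := (hL i).mul (hK j)
  have h3 := ((h 2).mul ((t 1 0).sub (t 0 1))).add (((h 1).mul ((t 2 0).sub (t 0 2))).add
    ((h 0).mul ((t 1 2).sub (t 2 1))))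
  have h4 := h3.congr_of_eventuallyEq (f₁ := pbracket Psl2 f g) (Filter.Eventually.of_forall fun y => by
    simp [pbracket, Fin.sum_univ_three, Psl2]
    ring)
  rw [h4.fderiv]
  simp [pbracket, Fin.sum_univ_three, Psl2]
  ring

theorem stmt_11
    (U : Set (Fin 3 → ℝ))
    (hU : U = {x | (x 0) ^ 2 + (x 1) ^ 2 ≠ 0 ∧
                   (x 0) ^ 2 + (x 1) ^ 2 - (x 2) ^ 2 ≠ 0})
    (f g : (Fin 3 → ℝ) → ℝ)
    (hf : ContDiffOn ℝ (⊤ : ℕ∞) f U) (hg : ContDiffOn ℝ (⊤ : ℕ∞) g U) :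
    ∀ x ∈ U,
      vfDeriv Wsl2 (pbracket Psl2 f g) x =
        pbracket Psl2 (vfDeriv Wsl2 f) g x + pbracket Psl2 f (vfDeriv Wsl2 g) x := by
  intro x hx
  have hO : IsOpen U := by
    rw [hU]
    exact (isOpen_ne_fun (by fun_prop) (by fun_prop)).inter
      (isOpen_ne_fun (by fun_prop) (by fun_prop))
  have hn := hO.mem_nhds hx
  have h2 : (2 : WithTop ℕ∞) ≤ ((⊤ : ℕ∞) : WithTop ℕ∞) := by
    exact WithTop.coe_le_coe.2 (le_top (a := (2 : ℕ∞)))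
  obtain ⟨L, hL, sL⟩ := partial_data f x ((hf.contDiffAt hn).of_le h2)
  obtain ⟨K, hK, sK⟩ := partial_data g x ((hg.contDiffAt hn).of_le h2)
  rw [hU] at hx
  obtain ⟨hr, hC⟩ := hx
  obtain ⟨k, M, hM, m0, m1, m2⟩ := W_data x hr hC
  have eW (u : (Fin 3 → ℝ) → ℝ) : vfDeriv Wsl2 u x = 
    x 0 * x 2 * eFac x / ((x 0) ^ 2 + (x 1) ^ 2) * fderiv ℝ u x (Pi.single 0 1) +
    x 1 * x 2 * eFac x / ((x 0) ^ 2 + (x 1) ^ 2) * fderiv ℝ u x (Pi.single 1 1) +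
    eFac x * fderiv ℝ u x (Pi.single 2 1) := by
    simp [vfDeriv, Fin.sum_univ_three, Wsl2]
  have eP (z : Fin 3 → ℝ) (u v : (Fin 3 → ℝ) → ℝ) : pbracket (fun _ => Psl2 z) u v x = 
    z 2 * (fderiv ℝ u x (Pi.single 1 1) * fderiv ℝ v x (Pi.single 0 1)
      - fderiv ℝ u x (Pi.single 0 1) * fderiv ℝ v x (Pi.single 1 1)) +
    z 1 * (fderiv ℝ u x (Pi.single 2 1) * fderiv ℝ v x (Pi.single 0 1)
      - fderiv ℝ u x (Pi.single 0 1) * fderiv ℝ v x (Pi.single 2 1)) +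
    z 0 * (fderiv ℝ u x (Pi.single 1 1) * fderiv ℝ v x (Pi.single 2 1)
      - fderiv ℝ u x (Pi.single 2 1) * fderiv ℝ v x (Pi.single 1 1)) := by
    simp [pbracket, Fin.sum_univ_three, Psl2]
    ring
  have eP' (u v : (Fin 3 → ℝ) → ℝ) : pbracket Psl2 u v x = pbracket (fun _ => Psl2 x) u v x := rfl
  rw [eW, eP', eP', eP, eP]
  simp only [P_fg x f L hL g K hK, W_f x hr M hM f L hL, W_f x hr M hM g K hK, eP, m0, m1, m2]
  simp [Fin.sum_univ_three, Psl2]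
  simp only [sL 1 0, sL 2 0, sL 2 1, sK 1 0, sK 2 0, sK 2 1]
  generalize L 0 (Pi.single 0 1) = l00
  generalize L 0 (Pi.single 1 1) = l01
  generalize L 0 (Pi.single 2 1) = l02
  generalize L 1 (Pi.single 1 1) = l11
  generalize L 1 (Pi.single 2 1) = l12
  generalize L 2 (Pi.single 2 1) = l22
  generalize K 0 (Pi.single 0 1) = k00
  generalize K 0 (Pi.single 1 1) = k01
  generalize K 0 (Pi.single 2 1) = k02
  generalize K 1 (Pi.single 1 1) = k11
  generalize K 1 (Pi.single 2 1) = k12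
  generalize K 2 (Pi.single 2 1) = k22
  generalize fderiv ℝ f x (Pi.single 0 1) = f0
  generalize fderiv ℝ f x (Pi.single 1 1) = f1
  generalize fderiv ℝ f x (Pi.single 2 1) = f2
  generalize fderiv ℝ g x (Pi.single 0 1) = g0
  generalize fderiv ℝ g x (Pi.single 1 1) = g1
  generalize fderiv ℝ g x (Pi.single 2 1) = g2
  generalize eFac x = e
  clear hU hO hn
  generalize x 0 = a at *
  generalize x 1 = b at *
  generalize x 2 = c at *
  field_simp
  ring
end

section
/- The Poisson structure on ℝ⁴ given by the skew-symmetric matrix field P(x) with nonzero upper-triangular entries P(x)_{13} = 2x₄, P(x)_{14} = 2x₃, P(x)_{23} = −2x₄, P(x)_{24} = 2x₃, P(x)_{34} = x₁ − x₂ is unimodular with respect to the Euclidean volume form: for every smooth function h : ℝ⁴ → ℝ, the divergence of the vector field x ↦ P(x)·∇h(x) is identically zero on ℝ⁴. -/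
open Matrix

/-- The gradient `(∂f/∂x₁, …, ∂f/∂x_m)` of a function on `ℝ^m`. -/
noncomputable def gradVec {m : ℕ} (f : (Fin m → ℝ) → ℝ) (x : Fin m → ℝ) :
    Fin m → ℝ :=
  fun i => fderiv ℝ f x (Pi.single i 1)

/-- The divergence `∑ i, ∂Vⁱ/∂xᵢ` of a vector field on `ℝ^m`. -/
noncomputable def divg {m : ℕ} (V : (Fin m → ℝ) → Fin m → ℝ) (x : Fin m → ℝ) : ℝ :=
  ∑ i, fderiv ℝ (fun y => V y i) x (Pi.single i 1)

/-- The coefficient matrix of the Pais–Uhlenbeck bivector field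
`Π = 2x₄ ∂₁∧∂₃ + 2x₃ ∂₁∧∂₄ − 2x₄ ∂₂∧∂₃ + 2x₃ ∂₂∧∂₄ + (x₁−x₂) ∂₃∧∂₄` on `ℝ⁴`. -/
def Ppu (x : Fin 4 → ℝ) : Matrix (Fin 4) (Fin 4) ℝ :=
  !![0, 0, 2 * x 3, 2 * x 2;
     0, 0, -2 * x 3, 2 * x 2;
     -2 * x 3, 2 * x 3, 0, x 0 - x 1;
     -2 * x 2, -2 * x 2, -(x 0 - x 1), 0]

theorem stmt_13 (h : (Fin 4 → ℝ) → ℝ) (hh : ContDiff ℝ (⊤ : ℕ∞) h) :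
    ∀ x : Fin 4 → ℝ, divg (fun y => Ppu y *ᵥ gradVec h y) x = 0 := by
  intro x
  have hd : Differentiable ℝ (fderiv ℝ h) :=
    (hh.fderiv_right (m := 1) (by norm_cast)).differentiable (by norm_num)
  have hg : ∀ i : Fin 4, HasFDerivAt (fun y => gradVec h y i)
      ((fderiv ℝ (fderiv ℝ h) x).flip (Pi.single i 1)) x := by
    intro i
    have := (hd x).hasFDerivAt.clm_apply (hasFDerivAt_const (Pi.single i (1:ℝ)) x)
    simpa [gradVec] using this
  have hs : ∀ i j : Fin 4, fderiv ℝ (fderiv ℝ h) x (Pi.single i 1) (Pi.single j 1)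
      = fderiv ℝ (fderiv ℝ h) x (Pi.single j 1) (Pi.single i 1) := by
    intro i j
    exact (hh.contDiffAt.isSymmSndFDerivAt (by simp; norm_cast)).eq _ _
  have hx : ∀ i : Fin 4, HasFDerivAt (fun y : Fin 4 → ℝ => y i)
      (ContinuousLinearMap.proj (R := ℝ) (φ := fun _ : Fin 4 => ℝ) i) x :=
    fun i => hasFDerivAt_apply i x
  have e0 := (((hx 3).const_mul 2).mul (hg 2)).add (((hx 2).const_mul 2).mul (hg 3))
  have e1 := (((hx 3).const_mul (-2)).mul (hg 2)).add (((hx 2).const_mul 2).mul (hg 3))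
  have e2 := ((((hx 3).const_mul (-2)).mul (hg 0)).add (((hx 3).const_mul 2).mul (hg 1))).add
    (((hx 0).sub (hx 1)).mul (hg 3))
  have e3 := ((((hx 2).const_mul (-2)).mul (hg 0)).add (((hx 2).const_mul (-2)).mul (hg 1))).add
    (((hx 0).sub (hx 1)).neg.mul (hg 2))
  have f0 : (fun y => (Ppu y *ᵥ gradVec h y) 0) = _ :=
    funext fun y => show _ = (2 * y 3) * gradVec h y 2 + (2 * y 2) * gradVec h y 3 by
      simp [Ppu, Matrix.mulVec, dotProduct, Fin.sum_univ_four]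
  have f1 : (fun y => (Ppu y *ᵥ gradVec h y) 1) = _ :=
    funext fun y => show _ = (-2 * y 3) * gradVec h y 2 + (2 * y 2) * gradVec h y 3 by
      simp [Ppu, Matrix.mulVec, dotProduct, Fin.sum_univ_four]
  have f2 : (fun y => (Ppu y *ᵥ gradVec h y) 2) = _ :=
    funext fun y => show _ = (-2 * y 3) * gradVec h y 0 + (2 * y 3) * gradVec h y 1
        + (y 0 - y 1) * gradVec h y 3 by
      simp [Ppu, Matrix.mulVec, dotProduct, Fin.sum_univ_four]
  have f3 : (fun y => (Ppu y *ᵥ gradVec h y) 3) = _ :=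
    funext fun y => show _ = (-2 * y 2) * gradVec h y 0 + (-2 * y 2) * gradVec h y 1
        + (-(y 0 - y 1)) * gradVec h y 2 by
      simp [Ppu, Matrix.mulVec, dotProduct, Fin.sum_univ_four]
  have g0 := (e0.congr_of_eventuallyEq (Filter.Eventually.of_forall (congrFun f0))).fderiv
  have g1 := (e1.congr_of_eventuallyEq (Filter.Eventually.of_forall (congrFun f1))).fderiv
  have g2 := (e2.congr_of_eventuallyEq (Filter.Eventually.of_forall (congrFun f2))).fderiv
  have g3 := (e3.congr_of_eventuallyEq (Filter.Eventually.of_forall (congrFun f3))).fderiv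
  rw [divg, Fin.sum_univ_four, g0, g1, g2, g3]
  simp [Pi.single_apply]
  rw [hs 0 2, hs 0 3, hs 1 2, hs 1 3, hs 2 3]
  ring
end

section
/- Let P(x) be the skew-symmetric 3×3 matrix field of the 𝔰𝔬(3) Lie–Poisson structure on ℝ³, with entries P(x)_{12} = x₃, P(x)_{13} = −x₂, P(x)_{23} = x₁, and let L(x) be the skew-symmetric 3×3 matrix field with entries L(x)_{12} = x₁ − x₂, L(x)_{13} = x₁ − x₃, L(x)_{23} = x₂ − x₃. Then for every x ∈ ℝ³ the matrix I − L(x)·P(x) is invertible and P(x)·(I − L(x)·P(x))⁻¹ = P(x); that is, the 𝔰𝔬(3) Poisson structure is invariant under the gauge transformation induced by the 2-form λ = (x₁−x₂)dx₁∧dx₂ + (x₁−x₃)dx₁∧dx₃ + (x₂−x₃)dx₂∧dx₃. -/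
open Matrix

/-- The coefficient matrix of the `𝔰𝔬(3)` Lie–Poisson bivector field on `ℝ³`. -/
def Pso3 (x : Fin 3 → ℝ) : Matrix (Fin 3) (Fin 3) ℝ :=
  !![0, x 2, -(x 1);
     -(x 2), 0, x 0;
     x 1, -(x 0), 0]

/-- The coefficient matrix of the 2-form
`λ = (x₁−x₂)dx₁∧dx₂ + (x₁−x₃)dx₁∧dx₃ + (x₂−x₃)dx₂∧dx₃`. -/
def Lgauge (x : Fin 3 → ℝ) : Matrix (Fin 3) (Fin 3) ℝ :=
  !![0, x 0 - x 1, x 0 - x 2;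
     -(x 0 - x 1), 0, x 1 - x 2;
     -(x 0 - x 2), -(x 1 - x 2), 0]

theorem stmt_14 :
    ∀ x : Fin 3 → ℝ,
      IsUnit (1 - Lgauge x * Pso3 x) ∧
        Pso3 x * (1 - Lgauge x * Pso3 x)⁻¹ = Pso3 x := by
  intro x
  have hPLP : Pso3 x * (Lgauge x * Pso3 x) = 0 := by
    ext i j
    fin_cases i <;> fin_cases j <;>
      simp [Pso3, Lgauge, Matrix.mul_apply, Fin.sum_univ_three] <;> ring
  have h1 : (1 - Lgauge x * Pso3 x) * (1 + Lgauge x * Pso3 x) = 1 := by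
    have h : Lgauge x * Pso3 x * (Lgauge x * Pso3 x) = 0 := by
      rw [Matrix.mul_assoc, hPLP, Matrix.mul_zero]
    rw [sub_mul, mul_add, mul_add, h]
    simp
  refine ⟨IsUnit.of_mul_eq_one _ h1, ?_⟩
  rw [Matrix.inv_eq_right_inv h1, mul_add, hPLP]
  simp
end

section
/- Let U ⊆ ℝ³ be open and K : U → ℝ smooth. Define the bracket of smooth functions f, g : U → ℝ by {f,g}(x) = det M(x), where M(x) is the 3×3 matrix whose rows are ∇K(x), ∇f(x), ∇g(x). Then this bracket satisfies the Jacobi identity on U; i.e., the Flaschka–Ratiu bivector field on ℝ³ determined by the prescribed Casimir function K is a Poisson bivector field. -/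
open Matrix

/-- The Flaschka–Ratiu bracket on `ℝ³` associated to a prescribed Casimir `K`:
`{f,g}(x) = det(∇K(x), ∇f(x), ∇g(x))`. -/
noncomputable def frBracket3 (K f g : (Fin 3 → ℝ) → ℝ) (x : Fin 3 → ℝ) : ℝ :=
  (Matrix.of ![gradVec K x, gradVec f x, gradVec g x]).det

/-- Second partial derivatives. -/
noncomputable def hessE (f : (Fin 3 → ℝ) → ℝ) (x : Fin 3 → ℝ) (i j : Fin 3) : ℝ :=
  fderiv ℝ (fderiv ℝ f) x (Pi.single j 1) (Pi.single i 1)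

theorem hessE_symm {f : (Fin 3 → ℝ) → ℝ} {x : Fin 3 → ℝ} (hf : ContDiffAt ℝ (⊤ : ℕ∞) f x)
    (i j : Fin 3) : hessE f x i j = hessE f x j i := by
  have h : IsSymmSndFDerivAt ℝ f x := by
    apply hf.isSymmSndFDerivAt
    simp only [minSmoothness_of_isRCLikeNormedField]
    exact WithTop.coe_le_coe.2 (le_top : (2 : ℕ∞) ≤ ⊤)
  exact h _ _

theorem hasFDerivAt_gradVec {f : (Fin 3 → ℝ) → ℝ} {x : Fin 3 → ℝ}
    (hf : ContDiffAt ℝ (⊤ : ℕ∞) f x) (i : Fin 3) :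
    HasFDerivAt (fun y => gradVec f y i)
      ((fderiv ℝ (fderiv ℝ f) x).flip (Pi.single i 1)) x := by
  have h1 : ContDiffAt ℝ 1 (fderiv ℝ f) x :=
    hf.fderiv_right (WithTop.coe_le_coe.2 (le_top : (1 + 1 : ℕ∞) ≤ ⊤))
  have h2 := (h1.differentiableAt (by simp)).hasFDerivAt
  have h3 := h2.clm_apply (hasFDerivAt_const (Pi.single i (1 : ℝ) : Fin 3 → ℝ) x)
  simpa [gradVec] using h3

theorem frBracket3_eq (K f g : (Fin 3 → ℝ) → ℝ) (x : Fin 3 → ℝ) :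
    frBracket3 K f g x =
      gradVec K x 0 * (gradVec f x 1 * gradVec g x 2 - gradVec f x 2 * gradVec g x 1)
      - gradVec K x 1 * (gradVec f x 0 * gradVec g x 2 - gradVec f x 2 * gradVec g x 0)
      + gradVec K x 2 * (gradVec f x 0 * gradVec g x 1 - gradVec f x 1 * gradVec g x 0) := by
  rw [frBracket3, Matrix.det_fin_three]
  simp
  ring

theorem gradVec_frBracket3 {K f g : (Fin 3 → ℝ) → ℝ} {x : Fin 3 → ℝ}
    (hK : ContDiffAt ℝ (⊤ : ℕ∞) K x) (hf : ContDiffAt ℝ (⊤ : ℕ∞) f x)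
    (hg : ContDiffAt ℝ (⊤ : ℕ∞) g x) (j : Fin 3) :
    gradVec (frBracket3 K f g) x j =
      hessE K x 0 j * (gradVec f x 1 * gradVec g x 2 - gradVec f x 2 * gradVec g x 1)
      - hessE K x 1 j * (gradVec f x 0 * gradVec g x 2 - gradVec f x 2 * gradVec g x 0)
      + hessE K x 2 j * (gradVec f x 0 * gradVec g x 1 - gradVec f x 1 * gradVec g x 0)
      + gradVec K x 0 * (hessE f x 1 j * gradVec g x 2 - hessE f x 2 j * gradVec g x 1
        + gradVec f x 1 * hessE g x 2 j - gradVec f x 2 * hessE g x 1 j)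
      - gradVec K x 1 * (hessE f x 0 j * gradVec g x 2 - hessE f x 2 j * gradVec g x 0
        + gradVec f x 0 * hessE g x 2 j - gradVec f x 2 * hessE g x 0 j)
      + gradVec K x 2 * (hessE f x 0 j * gradVec g x 1 - hessE f x 1 j * gradVec g x 0
        + gradVec f x 0 * hessE g x 1 j - gradVec f x 1 * hessE g x 0 j) := by
  have k := fun i => hasFDerivAt_gradVec hK i
  have a := fun i => hasFDerivAt_gradVec hf i
  have b := fun i => hasFDerivAt_gradVec hg i
  have key := (((k 0).mul (((a 1).mul (b 2)).sub ((a 2).mul (b 1)))).sub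
    ((k 1).mul (((a 0).mul (b 2)).sub ((a 2).mul (b 0))))).add
    ((k 2).mul (((a 0).mul (b 1)).sub ((a 1).mul (b 0))))
  have key2 := (key.congr_of_eventuallyEq (f₁ := frBracket3 K f g)
    (Filter.Eventually.of_forall (frBracket3_eq K f g))).fderiv
  conv_lhs => rw [gradVec, key2]
  simp [hessE]
  ring

theorem stmt_15 (U : Set (Fin 3 → ℝ)) (hU : IsOpen U)
    (K : (Fin 3 → ℝ) → ℝ) (hK : ContDiffOn ℝ (⊤ : ℕ∞) K U) :
    ∀ f g h : (Fin 3 → ℝ) → ℝ,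
      ContDiffOn ℝ (⊤ : ℕ∞) f U → ContDiffOn ℝ (⊤ : ℕ∞) g U → ContDiffOn ℝ (⊤ : ℕ∞) h U →
      ∀ x ∈ U,
        frBracket3 K f (frBracket3 K g h) x + frBracket3 K g (frBracket3 K h f) x +
          frBracket3 K h (frBracket3 K f g) x = 0 := by
  intro f g h hf hg hh x hx
  have hn := hU.mem_nhds hx
  have cK := hK.contDiffAt hn
  have cf := hf.contDiffAt hn
  have cg := hg.contDiffAt hn
  have ch := hh.contDiffAt hn
  rw [frBracket3_eq K f, frBracket3_eq K g, frBracket3_eq K h]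
  simp only [gradVec_frBracket3 cK cg ch, gradVec_frBracket3 cK ch cf, gradVec_frBracket3 cK cf cg]
  rw [hessE_symm cK 1 0, hessE_symm cK 2 0, hessE_symm cK 2 1,
    hessE_symm cf 1 0, hessE_symm cf 2 0, hessE_symm cf 2 1,
    hessE_symm cg 1 0, hessE_symm cg 2 0, hessE_symm cg 2 1,
    hessE_symm ch 1 0, hessE_symm ch 2 0, hessE_symm ch 2 1]
  ring
end

section
/- Let U ⊆ ℝ⁴ be open and K₁, K₂ : U → ℝ smooth. Define the bracket of smooth functions f, g : U → ℝ by {f,g}(x) = det M(x), where M(x) is the 4×4 matrix whose rows are ∇K₁(x), ∇K₂(x), ∇f(x), ∇g(x). Then this bracket satisfies the Jacobi identity on U; i.e., the Flaschka–Ratiu bivector field on ℝ⁴ determined by the prescribed Casimir functions K₁, K₂ is a Poisson bivector field. -/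
open Matrix

/-- The Flaschka–Ratiu bracket on `ℝ⁴` associated to prescribed Casimirs `K₁, K₂`:
`{f,g}(x) = det(∇K₁(x), ∇K₂(x), ∇f(x), ∇g(x))`. -/
noncomputable def frBracket4 (K₁ K₂ f g : (Fin 4 → ℝ) → ℝ) (x : Fin 4 → ℝ) : ℝ :=
  (Matrix.of ![gradVec K₁ x, gradVec K₂ x, gradVec f x, gradVec g x]).det

/-- Explicit 2x2 minor. -/
def mm2 (p q : Fin 4 → ℝ) (i j : Fin 4) : ℝ := p i * q j - p j * q i

/-- Explicit 4x4 determinant (Laplace along the first two rows). -/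
def dd4 (p q r s : Fin 4 → ℝ) : ℝ :=
  mm2 p q 0 1 * mm2 r s 2 3 - mm2 p q 0 2 * mm2 r s 1 3 + mm2 p q 0 3 * mm2 r s 1 2
  + mm2 p q 1 2 * mm2 r s 0 3 - mm2 p q 1 3 * mm2 r s 0 2 + mm2 p q 2 3 * mm2 r s 0 1

theorem det_eq_dd4 (p q r s : Fin 4 → ℝ) : (Matrix.of ![p, q, r, s]).det = dd4 p q r s := by
  simp [Matrix.det_succ_row_zero, Fin.sum_univ_succ, dd4, mm2, Fin.succAbove]
  ring

theorem mm2_deriv (p q : ℝ → Fin 4 → ℝ) (p' q' : Fin 4 → ℝ) (t : ℝ)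
    (hp : ∀ i, HasDerivAt (fun t => p t i) (p' i) t)
    (hq : ∀ i, HasDerivAt (fun t => q t i) (q' i) t) (i j : Fin 4) :
    HasDerivAt (fun t => mm2 (p t) (q t) i j) (mm2 p' (q t) i j + mm2 (p t) q' i j) t := by
  unfold mm2
  refine (((hp i).mul (hq j)).sub ((hp j).mul (hq i))).congr_deriv ?_
  ring

theorem dd4_deriv (p q r s : ℝ → Fin 4 → ℝ) (p' q' r' s' : Fin 4 → ℝ) (t : ℝ)
    (hp : ∀ i, HasDerivAt (fun t => p t i) (p' i) t)
    (hq : ∀ i, HasDerivAt (fun t => q t i) (q' i) t)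
    (hr : ∀ i, HasDerivAt (fun t => r t i) (r' i) t)
    (hs : ∀ i, HasDerivAt (fun t => s t i) (s' i) t) :
    HasDerivAt (fun t => dd4 (p t) (q t) (r t) (s t))
      (dd4 p' (q t) (r t) (s t) + dd4 (p t) q' (r t) (s t)
        + dd4 (p t) (q t) r' (s t) + dd4 (p t) (q t) (r t) s') t := by
  have A := mm2_deriv p q p' q' t hp hq
  have B := mm2_deriv r s r' s' t hr hs
  unfold dd4
  refine (((((((A 0 1).mul (B 2 3)).sub ((A 0 2).mul (B 1 3))).add ((A 0 3).mul (B 1 2))).add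
    ((A 1 2).mul (B 0 3))).sub ((A 1 3).mul (B 0 2))).add ((A 2 3).mul (B 0 1))).congr_deriv ?_
  ring

/-- Second derivatives. -/
noncomputable def hess4 (f : (Fin 4 → ℝ) → ℝ) (x : Fin 4 → ℝ) (i j : Fin 4) : ℝ :=
  fderiv ℝ (fderiv ℝ f) x (Pi.single i 1) (Pi.single j 1)

theorem hess4_symm {f : (Fin 4 → ℝ) → ℝ} {x : Fin 4 → ℝ} (hf : ContDiffAt ℝ (⊤ : ℕ∞) f x)
    (i j : Fin 4) : hess4 f x i j = hess4 f x j i := by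
  have : IsSymmSndFDerivAt ℝ f x := hf.isSymmSndFDerivAt (by
    simp only [minSmoothness_of_isRCLikeNormedField]
    exact WithTop.coe_le_coe.2 (le_top : (2 : ℕ∞) ≤ ⊤))
  exact this _ _

theorem grad_diff {f : (Fin 4 → ℝ) → ℝ} {x : Fin 4 → ℝ} (hf : ContDiffAt ℝ (⊤ : ℕ∞) f x) :
    DifferentiableAt ℝ (fderiv ℝ f) x := by
  have h : ContDiffAt ℝ 1 (fderiv ℝ f) x :=
    hf.fderiv_right (WithTop.coe_le_coe.2 (le_top : ((1 + 1 : ℕ∞)) ≤ ⊤))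
  exact h.differentiableAt (by simp)

theorem grad_line {f : (Fin 4 → ℝ) → ℝ} {x : Fin 4 → ℝ} (hf : ContDiffAt ℝ (⊤ : ℕ∞) f x)
    (i j : Fin 4) :
    HasDerivAt (fun t : ℝ => gradVec f (x + t • Pi.single i 1) j) (hess4 f x i j) 0 := by
  have h1 : HasFDerivAt (fun y => gradVec f y j)
      ((fderiv ℝ (fderiv ℝ f) x).flip (Pi.single j 1)) x := by
    have := (grad_diff hf).hasFDerivAt.clm_apply (hasFDerivAt_const (Pi.single j (1:ℝ)) x)
    simpa [gradVec] using this
  have h2 := h1.hasLineDerivAt (Pi.single i 1)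
  exact h2

theorem grad_comp_diff {f : (Fin 4 → ℝ) → ℝ} {x : Fin 4 → ℝ} (hf : ContDiffAt ℝ (⊤ : ℕ∞) f x)
    (j : Fin 4) : DifferentiableAt ℝ (fun y => gradVec f y j) x :=
  (grad_diff hf).clm_apply (differentiableAt_const _)

theorem grad_bracket {a b f g : (Fin 4 → ℝ) → ℝ} {x : Fin 4 → ℝ}
    (ha : ContDiffAt ℝ (⊤ : ℕ∞) a x) (hb : ContDiffAt ℝ (⊤ : ℕ∞) b x)
    (hf : ContDiffAt ℝ (⊤ : ℕ∞) f x) (hg : ContDiffAt ℝ (⊤ : ℕ∞) g x) (i : Fin 4) :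
    gradVec (frBracket4 a b f g) x i =
      dd4 (hess4 a x i) (gradVec b x) (gradVec f x) (gradVec g x)
      + dd4 (gradVec a x) (hess4 b x i) (gradVec f x) (gradVec g x)
      + dd4 (gradVec a x) (gradVec b x) (hess4 f x i) (gradVec g x)
      + dd4 (gradVec a x) (gradVec b x) (gradVec f x) (hess4 g x i) := by
  have e : frBracket4 a b f g =
      fun y => dd4 (gradVec a y) (gradVec b y) (gradVec f y) (gradVec g y) := by
    funext y; exact det_eq_dd4 _ _ _ _
  have hd : DifferentiableAt ℝ (frBracket4 a b f g) x := by
    rw [e]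
    have h1 := grad_comp_diff ha
    have h2 := grad_comp_diff hb
    have h3 := grad_comp_diff hf
    have h4 := grad_comp_diff hg
    unfold dd4 mm2
    fun_prop
  have L1 := hd.hasFDerivAt.hasLineDerivAt (Pi.single i 1)
  have L2 := dd4_deriv _ _ _ _ _ _ _ _ 0 (grad_line ha i) (grad_line hb i) (grad_line hf i)
    (grad_line hg i)
  simp only [zero_smul, add_zero] at L2
  unfold HasLineDerivAt at L1
  rw [e] at L1
  have := L1.unique L2
  rw [← this, ← e]
  rfl

/-- Cofactor vector of the first three rows. -/
def xx4 (a b u : Fin 4 → ℝ) (i : Fin 4) : ℝ := dd4 a b u (Pi.single i 1)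

theorem dd4_xx4 (a b u w : Fin 4 → ℝ) : dd4 a b u w =
    xx4 a b u 0 * w 0 + xx4 a b u 1 * w 1 + xx4 a b u 2 * w 2 + xx4 a b u 3 * w 3 := by
  simp [xx4, dd4, mm2]
  ring

theorem poly_A (a b u v w : Fin 4 → ℝ) (A : Fin 4 → Fin 4 → ℝ) (hA : ∀ i j, A i j = A j i) :
    dd4 a b u (fun i => dd4 (A i) b v w) + dd4 a b v (fun i => dd4 (A i) b w u)
      + dd4 a b w (fun i => dd4 (A i) b u v) = 0 := by
  simp only [dd4, mm2]
  rw [hA 1 0, hA 2 0, hA 3 0, hA 2 1, hA 3 1, hA 3 2]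
  ring

theorem dd4_swap12 (a b u v : Fin 4 → ℝ) : dd4 a b u v = - dd4 b a u v := by
  simp only [dd4, mm2]; ring

theorem dd4_swap34 (a b u v : Fin 4 → ℝ) : dd4 a b u v = - dd4 a b v u := by
  simp only [dd4, mm2]; ring

theorem poly_B (a b u v w : Fin 4 → ℝ) (A : Fin 4 → Fin 4 → ℝ) (hA : ∀ i j, A i j = A j i) :
    dd4 a b u (fun i => dd4 a (A i) v w) + dd4 a b v (fun i => dd4 a (A i) w u)
      + dd4 a b w (fun i => dd4 a (A i) u v) = 0 := by
  have h := poly_A b a u v w A hA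
  rw [dd4_swap12 b a, dd4_swap12 b a, dd4_swap12 b a] at h
  have e : ∀ p q, (fun i => dd4 a (A i) p q) = fun i => - dd4 (A i) a p q := by
    intro p q; funext i; exact dd4_swap12 _ _ _ _
  rw [e, e, e]
  rw [dd4_xx4] at h ⊢
  simp only [dd4_xx4 a b v, dd4_xx4 a b w] at h ⊢
  linarith

theorem poly_G (a b u w : Fin 4 → ℝ) (G : Fin 4 → Fin 4 → ℝ) (hG : ∀ i j, G i j = G j i) :
    dd4 a b u (fun i => dd4 a b (G i) w) + dd4 a b w (fun i => dd4 a b u (G i)) = 0 := by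
  have e : (fun i => dd4 a b (G i) w) = fun i => - dd4 a b w (G i) := by
    funext i; exact dd4_swap34 _ _ _ _
  rw [e]
  simp only [dd4_xx4 a b u, dd4_xx4 a b w]
  rw [hG 1 0, hG 2 0, hG 3 0, hG 2 1, hG 3 1, hG 3 2]
  ring

theorem dd4_add (a b u : Fin 4 → ℝ) (p q r s : Fin 4 → ℝ) :
    dd4 a b u (fun i => p i + q i + r i + s i) =
      dd4 a b u p + dd4 a b u q + dd4 a b u r + dd4 a b u s := by
  simp only [dd4_xx4 a b u]
  ring

theorem double_bracket {a b f g h : (Fin 4 → ℝ) → ℝ} {x : Fin 4 → ℝ}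
    (ha : ContDiffAt ℝ (⊤ : ℕ∞) a x) (hb : ContDiffAt ℝ (⊤ : ℕ∞) b x)
    (hg : ContDiffAt ℝ (⊤ : ℕ∞) g x) (hh : ContDiffAt ℝ (⊤ : ℕ∞) h x) :
    frBracket4 a b f (frBracket4 a b g h) x =
      dd4 (gradVec a x) (gradVec b x) (gradVec f x)
        (fun i => dd4 (hess4 a x i) (gradVec b x) (gradVec g x) (gradVec h x))
      + dd4 (gradVec a x) (gradVec b x) (gradVec f x)
        (fun i => dd4 (gradVec a x) (hess4 b x i) (gradVec g x) (gradVec h x))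
      + dd4 (gradVec a x) (gradVec b x) (gradVec f x)
        (fun i => dd4 (gradVec a x) (gradVec b x) (hess4 g x i) (gradVec h x))
      + dd4 (gradVec a x) (gradVec b x) (gradVec f x)
        (fun i => dd4 (gradVec a x) (gradVec b x) (gradVec g x) (hess4 h x i)) := by
  rw [← dd4_add]
  have e : gradVec (frBracket4 a b g h) x = _ := funext (grad_bracket ha hb hg hh)
  rw [← e]
  exact det_eq_dd4 _ _ _ _

theorem stmt_16 (U : Set (Fin 4 → ℝ)) (hU : IsOpen U)
    (K₁ K₂ : (Fin 4 → ℝ) → ℝ)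
    (hK₁ : ContDiffOn ℝ (⊤ : ℕ∞) K₁ U) (hK₂ : ContDiffOn ℝ (⊤ : ℕ∞) K₂ U) :
    ∀ f g h : (Fin 4 → ℝ) → ℝ,
      ContDiffOn ℝ (⊤ : ℕ∞) f U → ContDiffOn ℝ (⊤ : ℕ∞) g U → ContDiffOn ℝ (⊤ : ℕ∞) h U →
      ∀ x ∈ U,
        frBracket4 K₁ K₂ f (frBracket4 K₁ K₂ g h) x +
          frBracket4 K₁ K₂ g (frBracket4 K₁ K₂ h f) x +
          frBracket4 K₁ K₂ h (frBracket4 K₁ K₂ f g) x = 0 := by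
  intro f g h hf hg hh x hx
  have hn := hU.mem_nhds hx
  have ca := hK₁.contDiffAt hn
  have cb := hK₂.contDiffAt hn
  have cf := hf.contDiffAt hn
  have cg := hg.contDiffAt hn
  have ch := hh.contDiffAt hn
  rw [double_bracket ca cb cg ch, double_bracket ca cb ch cf, double_bracket ca cb cf cg]
  have pA := poly_A (gradVec K₁ x) (gradVec K₂ x) (gradVec f x) (gradVec g x) (gradVec h x)
    (hess4 K₁ x) (hess4_symm ca)
  have pB := poly_B (gradVec K₁ x) (gradVec K₂ x) (gradVec f x) (gradVec g x) (gradVec h x)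
    (hess4 K₂ x) (hess4_symm cb)
  have pG := poly_G (gradVec K₁ x) (gradVec K₂ x) (gradVec f x) (gradVec h x)
    (hess4 g x) (hess4_symm cg)
  have pH := poly_G (gradVec K₁ x) (gradVec K₂ x) (gradVec g x) (gradVec f x)
    (hess4 h x) (hess4_symm ch)
  have pF := poly_G (gradVec K₁ x) (gradVec K₂ x) (gradVec h x) (gradVec g x)
    (hess4 f x) (hess4_symm cf)
  linarith
end

section
/- Let P(x) be the skew-symmetric 3×3 matrix field on ℝ³ with entries P(x)_{12} = 2(x₂ + x₃), P(x)_{13} = x₁ − x₂, P(x)_{23} = x₁ + x₂ + 2x₃, and for a real parameter a let P_N(y) be the skew-symmetric 3×3 matrix field with entries P_N(y)_{12} = 0, P_N(y)_{13} = y₁ − 4a·y₂, P_N(y)_{23} = 4a·y₁ + y₂. Then there exist a real number a > 0 and an invertible 3×3 real matrix A such that A·P(x)·Aᵀ = P_N(A·x) for every x ∈ ℝ³; that is, the Lie–Poisson bivector field Π = 2(x₂+x₃)∂₁∧∂₂ + (x₁−x₂)∂₁∧∂₃ + (x₁+x₂+2x₃)∂₂∧∂₃ admits the Lie–Poisson bivector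 field Π_N = (y₁−4a·y₂)∂₁∧∂₃ + (4a·y₁+y₂)∂₂∧∂₃ as a linear normal form. -/
open Matrix

/-- The coefficient matrix of the Lie–Poisson bivector field
`Π = 2(x₂+x₃)∂₁∧∂₂ + (x₁−x₂)∂₁∧∂₃ + (x₁+x₂+2x₃)∂₂∧∂₃` on `ℝ³`. -/
def Plp (x : Fin 3 → ℝ) : Matrix (Fin 3) (Fin 3) ℝ :=
  !![0, 2 * (x 1 + x 2), x 0 - x 1;
     -(2 * (x 1 + x 2)), 0, x 0 + x 1 + 2 * x 2;
     -(x 0 - x 1), -(x 0 + x 1 + 2 * x 2), 0]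

/-- The coefficient matrix of the normal form
`Π_N = (y₁−4a·y₂)∂₁∧∂₃ + (4a·y₁+y₂)∂₂∧∂₃` on `ℝ³`. -/
def PN (a : ℝ) (y : Fin 3 → ℝ) : Matrix (Fin 3) (Fin 3) ℝ :=
  !![0, 0, y 0 - 4 * a * y 1;
     0, 0, 4 * a * y 0 + y 1;
     -(y 0 - 4 * a * y 1), -(4 * a * y 0 + y 1), 0]

theorem stmt_17 :
    ∃ a : ℝ, 0 < a ∧ ∃ A : Matrix (Fin 3) (Fin 3) ℝ, IsUnit A ∧
      ∀ x : Fin 3 → ℝ, A * Plp x * Aᵀ = PN a (A *ᵥ x) := by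
  refine ⟨1 / 4, by norm_num, !![1, -1, 0; 1, 1, 2; -1, 0, 0], ?_, ?_⟩
  · rw [Matrix.isUnit_iff_isUnit_det, isUnit_iff_ne_zero, Matrix.det_fin_three]
    simp
  · intro x
    ext i j
    fin_cases i <;> fin_cases j <;>
      simp [Plp, PN, Matrix.mul_apply, Matrix.mulVec, dotProduct, Fin.sum_univ_three] <;> ring
end

section
/- Let P(x) be the skew-symmetric 3×3 matrix field on ℝ³ with entries P(x)_{12} = 2(x₂ + x₃), P(x)_{13} = x₁ − x₂, P(x)_{23} = x₁ + x₂ + 2x₃. If K : ℝ³ → ℝ is a smooth function satisfying P(x)·∇K(x) = 0 for all x ∈ ℝ³, then K is constant; that is, the Lie–Poisson bivector field Π = 2(x₂+x₃)∂₁∧∂₂ + (x₁−x₂)∂₁∧∂₃ + (x₁+x₂+2x₃)∂₂∧∂₃ does not admit global, non-constant Casimir functions. -/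
open Matrix

lemma fderiv_eq_gradVec (K : (Fin 3 → ℝ) → ℝ) (x w : Fin 3 → ℝ) :
    fderiv ℝ K x w = w 0 * gradVec K x 0 + w 1 * gradVec K x 1 + w 2 * gradVec K x 2 := by
  have hw : w = w 0 • Pi.single 0 1 + w 1 • Pi.single 1 1 + w 2 • Pi.single 2 1 := by
    funext i
    fin_cases i <;> simp
  conv_lhs => rw [hw]
  simp [gradVec]

lemma casimir_rows (K : (Fin 3 → ℝ) → ℝ) (x : Fin 3 → ℝ) (h : Plp x *ᵥ gradVec K x = 0) :
    2 * (x 1 + x 2) * gradVec K x 1 + (x 0 - x 1) * gradVec K x 2 = 0 ∧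
    -(x 0 - x 1) * gradVec K x 0 - (x 0 + x 1 + 2 * x 2) * gradVec K x 1 = 0 := by
  have h0 := congrFun h 0
  have h2 := congrFun h 2
  simp [Plp, Matrix.mulVec, dotProduct, Fin.sum_univ_three] at h0 h2
  constructor <;> linarith

/-- A function with vanishing derivative along a curve is constant on it. -/
lemma const_along (K : (Fin 3 → ℝ) → ℝ) (hK : Differentiable ℝ K)
    (γ γ' : ℝ → Fin 3 → ℝ) (hγ : ∀ t, HasDerivAt γ (γ' t) t)
    (h0 : ∀ t, fderiv ℝ K (γ t) (γ' t) = 0) (s t : ℝ) : K (γ s) = K (γ t) := by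
  have hd : ∀ t, HasDerivAt (fun t => K (γ t)) 0 t := fun t => by
    have := (hK (γ t)).hasFDerivAt.comp_hasDerivAt t (hγ t)
    rw [h0 t] at this
    exact this
  exact is_const_of_deriv_eq_zero (fun t => (hd t).differentiableAt) (fun t => (hd t).deriv) s t

/-- The spiral flow of `x₃` retracts onto the singular line. -/
lemma spiral (K : (Fin 3 → ℝ) → ℝ) (hK : Differentiable ℝ K)
    (hC : ∀ x : Fin 3 → ℝ, Plp x *ᵥ gradVec K x = 0) (x : Fin 3 → ℝ) :
    K x = K ![-x 2, -x 2, x 2] := by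
  obtain ⟨A, hA⟩ : ∃ A, A = x 0 - x 1 := ⟨_, rfl⟩
  obtain ⟨B, hB⟩ : ∃ B, B = 2 * (x 1 + x 2) + A := ⟨_, rfl⟩
  let q : ℝ → ℝ := fun t => Real.exp (-t) * (A * Real.cos t + B * Real.sin t)
  let p : ℝ → ℝ := fun t => Real.exp (-t) * ((B - A) * Real.cos t - (A + B) * Real.sin t)
  have he : ∀ t, HasDerivAt (fun t : ℝ => Real.exp (-t)) (-Real.exp (-t)) t := fun t => by
    simpa using (hasDerivAt_neg t).exp
  have hq : ∀ t, HasDerivAt q (p t) t := fun t => by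
    have := (he t).mul (((Real.hasDerivAt_cos t).const_mul A).add
      ((Real.hasDerivAt_sin t).const_mul B))
    refine this.congr_deriv ?_
    simp only [p, Pi.add_apply]
    ring
  have hp : ∀ t, HasDerivAt p (-2 * p t - 2 * q t) t := fun t => by
    have := (he t).mul (((Real.hasDerivAt_cos t).const_mul (B - A)).sub
      ((Real.hasDerivAt_sin t).const_mul (A + B)))
    refine this.congr_deriv ?_
    simp only [p, q, Pi.sub_apply]
    ring
  let γ : ℝ → Fin 3 → ℝ := fun t => ![q t + p t / 2 - x 2, p t / 2 - x 2, x 2]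
  let γ' : ℝ → Fin 3 → ℝ := fun t => ![-q t, -p t - q t, 0]
  have hγ : ∀ t, HasDerivAt γ (γ' t) t := fun t => by
    rw [hasDerivAt_pi]
    intro i
    fin_cases i
    · exact (((hq t).add ((hp t).div_const 2)).sub_const (x 2)).congr_deriv (by simp [γ']; ring)
    · exact (((hp t).div_const 2).sub_const (x 2)).congr_deriv (by simp [γ']; ring)
    · exact (hasDerivAt_const t (x 2)).congr_deriv (by simp [γ'])
  have hc := const_along K hK γ γ' hγ (fun t => by
    have h := (casimir_rows K (γ t) (hC _)).2
    rw [fderiv_eq_gradVec]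
    have e0 : γ t 0 = q t + p t / 2 - x 2 := rfl
    have e1 : γ t 1 = p t / 2 - x 2 := rfl
    have e2 : γ t 2 = x 2 := rfl
    have f0 : γ' t 0 = -q t := rfl
    have f1 : γ' t 1 = -p t - q t := rfl
    have f2 : γ' t 2 = 0 := rfl
    rw [e0, e1, e2] at h
    rw [f0, f1, f2]
    linear_combination h)
  have hγ0 : γ 0 = x := by
    funext i
    fin_cases i <;> simp [γ, p, q, hA, hB] <;> ring
  have hexp : Filter.Tendsto (fun t : ℝ => Real.exp (-t)) Filter.atTop (nhds 0) :=
    Real.tendsto_exp_neg_atTop_nhds_zero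
  have hb : ∀ a b : ℝ, Filter.Tendsto
      (fun t : ℝ => Real.exp (-t) * (a * Real.cos t + b * Real.sin t)) Filter.atTop (nhds 0) := by
    intro a b
    refine squeeze_zero_norm (a := fun t => Real.exp (-t) * (|a| + |b|)) (fun t => ?_)
      (by simpa using hexp.mul_const (|a| + |b|))
    rw [norm_mul, Real.norm_eq_abs, Real.norm_eq_abs, Real.abs_exp]
    refine mul_le_mul_of_nonneg_left ?_ (Real.exp_pos _).le
    refine (abs_add_le _ _).trans (add_le_add ?_ ?_)
    · rw [abs_mul]
      exact mul_le_of_le_one_right (abs_nonneg _) (Real.abs_cos_le_one t)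
    · rw [abs_mul]
      exact mul_le_of_le_one_right (abs_nonneg _) (Real.abs_sin_le_one t)
  have hqt : Filter.Tendsto q Filter.atTop (nhds 0) := hb A B
  have hpt : Filter.Tendsto p Filter.atTop (nhds 0) := by
    refine (hb (B - A) (-(A + B))).congr (fun t => ?_)
    simp only [p]
    ring
  have hγt : Filter.Tendsto γ Filter.atTop (nhds ![-x 2, -x 2, x 2]) := by
    rw [tendsto_pi_nhds]
    intro i
    fin_cases i
    · simpa [γ] using (hqt.add (hpt.div_const 2)).sub_const (x 2)
    · simpa [γ] using (hpt.div_const 2).sub_const (x 2)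
    · simp [γ]
  have hlim := (hK.continuous.tendsto _).comp hγt
  have hlim2 : Filter.Tendsto (K ∘ γ) Filter.atTop (nhds (K x)) := by
    refine tendsto_const_nhds.congr (fun t => ?_)
    rw [← hγ0]
    exact hc 0 t
  exact tendsto_nhds_unique hlim2 hlim

lemma line_const (K : (Fin 3 → ℝ) → ℝ) (hK : Differentiable ℝ K)
    (hC : ∀ x : Fin 3 → ℝ, Plp x *ᵥ gradVec K x = 0) (c d : ℝ) :
    K ![1 - c, -c, c] = K ![1 - d, -d, d] := by
  refine const_along K hK (fun t => ![1 - t, -t, t]) (fun _ => ![-1, -1, 1]) (fun t => ?_)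
    (fun t => ?_) c d
  · rw [hasDerivAt_pi]
    intro i
    fin_cases i
    · simpa using (hasDerivAt_id t).const_sub 1
    · simpa using hasDerivAt_neg t
    · exact hasDerivAt_id t
  · obtain ⟨h1, h2⟩ := casimir_rows K _ (hC ![1 - t, -t, t])
    rw [fderiv_eq_gradVec]
    simp at h1 h2 ⊢
    linarith

theorem stmt_18 (K : (Fin 3 → ℝ) → ℝ) (hK : ContDiff ℝ (⊤ : ℕ∞) K)
    (hCasimir : ∀ x : Fin 3 → ℝ, Plp x *ᵥ gradVec K x = 0) :
    ∀ x y : Fin 3 → ℝ, K x = K y := by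
  have hd : Differentiable ℝ K := hK.differentiable (by simp)
  have key : ∀ x : Fin 3 → ℝ, K x = K ![1 - x 2, -x 2, x 2] := fun x => by
    rw [spiral K hd hCasimir x, spiral K hd hCasimir ![1 - x 2, -x 2, x 2]]
    simp
  intro x y
  rw [key x, key y]
  exact line_const K hd hCasimir _ _
end
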